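/- Let M ⊆ ℝ be an open interval, V : M → ℝ continuous with V(μ) > 0 for all μ ∈ M, θ : M → ℝ differentiable with θ′(μ) = 1/V(μ), and b : ℝ → ℝ differentiable on θ(M) with b′(θ(μ)) = μ for all μ ∈ M. Let m : ℝ → ℝ with m(s) ∈ M for all s, let x₁, …, x_n ∈ ℝᵖ, y₁, …, y_n ∈ ℝ, h : ℝ → (0, ∞), a ∈ M, a prior density p : ℝᵖ → [0, ∞), and α > 0, and set ψ = (α + n)/α. Define μ_i(β) = m(x_iᵀβ) and f(y_i | β, x_i) = h(y_i)·exp{ θ(μ_i(β))·y_i − b(θ(μ_i(β))) }. Then there exists a constant c > 0, not depending on β, such that for all β ∈ ℝᵖ: p(β) · exp{ (1/ψ) · Σ_{i=1}^n ∫_a^{μ_i(β)} (y_i − t)/V(t) dt } = c · p(β) · ∏_{i=1}^n f(y_i | β, x_i)^{α/(α+n)}. -/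

import Mathlib

open scoped RealInnerProductSpace

/-!
For an exponential family with mean `t`, the quasi-score `(y - t) / V t` is the derivative of
`θ t * y - b (θ t)`, the part of the log-density that depends on `t`. The exponential of the
quasi-log-likelihood is therefore the likelihood ratio `f(y | μ) / f(y | a)`, and the constant of
proportionality between the two posteriors is `∏ i, f(y i | a)` raised to minus the power of the
likelihood.
-/

open Set MeasureTheory Topology

/-- The quasi-log-likelihood at mean `μ` of an observation `y`, for the variance function `V` and
the base point `a`. -/
noncomputable def quasiLogLikelihood (V : ℝ → ℝ) (a y μ : ℝ) : ℝ :=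
  ∫ t in a..μ, (y - t) / V t

/-- The density at `y` of the one-parameter exponential family with base density `h` and cumulant
function `b`, parametrized by its mean `μ` through the natural parameter `θ μ`. -/
noncomputable def expFamilyDensity (h θ b : ℝ → ℝ) (μ y : ℝ) : ℝ :=
  h y * Real.exp (θ μ * y - b (θ μ))

theorem expFamilyDensity_pos {h : ℝ → ℝ} {y : ℝ} (hy : 0 < h y) (θ b : ℝ → ℝ) (μ : ℝ) :
    0 < expFamilyDensity h θ b μ y :=
  mul_pos hy (Real.exp_pos _)

theorem mem_nhds_of_mem_Ioo_min_max {X : Type*} [TopologicalSpace X] [LinearOrder X]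
    [OrderClosedTopology X] {s : Set X} (hs : s.OrdConnected) {u v t : X} (hu : u ∈ s)
    (hv : v ∈ s) (ht : t ∈ Ioo (min u v) (max u v)) : s ∈ 𝓝 t :=
  Filter.mem_of_superset (Ioo_mem_nhds ht.1 ht.2)
    (Ioo_subset_Icc_self.trans (hs.uIcc_subset hu hv))

section ExponentialFamily

variable {M : Set ℝ} {V θ b : ℝ → ℝ} {a μ : ℝ}

theorem intervalIntegrable_quasiScore (hM : M.OrdConnected) (hV : ∀ t ∈ M, 0 < V t)
    (hθ : ∀ t ∈ M, HasDerivWithinAt θ (1 / V t) M t) (ha : a ∈ M) (hμ : μ ∈ M) (y : ℝ) :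
    IntervalIntegrable (fun t => (y - t) / V t) volume a μ := by
  have hsub : uIcc a μ ⊆ M := hM.uIcc_subset ha hμ
  have hnhds : ∀ t ∈ Ioo (min a μ) (max a μ), M ∈ 𝓝 t := fun t ht =>
    mem_nhds_of_mem_Ioo_min_max hM ha hμ ht
  have hinv : IntervalIntegrable (fun t => 1 / V t) volume a μ :=
    intervalIntegral.intervalIntegrable_deriv_of_nonneg
      (fun t ht => (hθ t (hsub ht)).continuousWithinAt.mono hsub)
      (fun t ht => (hθ t (mem_of_mem_nhds (hnhds t ht))).hasDerivAt (hnhds t ht))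
      (fun t ht => (one_div_pos.2 (hV t (mem_of_mem_nhds (hnhds t ht)))).le)
  have hlin : ContinuousOn (fun t => y - t) (uIcc a μ) := by fun_prop
  simpa only [mul_one_div] using hinv.continuousOn_mul hlin

theorem hasDerivWithinAt_logDensity {t v : ℝ} (hθ : HasDerivWithinAt θ v M t)
    (hb : HasDerivWithinAt b t (θ '' M) (θ t)) (y : ℝ) :
    HasDerivWithinAt (fun s => θ s * y - b (θ s)) ((y - t) * v) M t := by
  have hcomp : HasDerivWithinAt (fun s => b (θ s)) (t * v) M t :=
    hb.comp t hθ (mapsTo_image θ M)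
  exact ((hθ.mul_const y).sub hcomp).congr_deriv (by ring)

theorem quasiLogLikelihood_eq_sub (hM : M.OrdConnected) (hV : ∀ t ∈ M, 0 < V t)
    (hθ : ∀ t ∈ M, HasDerivWithinAt θ (1 / V t) M t)
    (hb : ∀ t ∈ M, HasDerivWithinAt b t (θ '' M) (θ t)) (ha : a ∈ M) (hμ : μ ∈ M) (y : ℝ) :
    quasiLogLikelihood V a y μ = (θ μ * y - b (θ μ)) - (θ a * y - b (θ a)) := by
  have hsub : uIcc a μ ⊆ M := hM.uIcc_subset ha hμ
  have hnhds : ∀ t ∈ Ioo (min a μ) (max a μ), M ∈ 𝓝 t := fun t ht =>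
    mem_nhds_of_mem_Ioo_min_max hM ha hμ ht
  have hderiv : ∀ t ∈ M,
      HasDerivWithinAt (fun s => θ s * y - b (θ s)) ((y - t) / V t) M t := fun t ht => by
    simpa only [mul_one_div] using hasDerivWithinAt_logDensity (hθ t ht) (hb t ht) y
  exact intervalIntegral.integral_eq_sub_of_hasDeriv_right
    (fun t ht => (hderiv t (hsub ht)).continuousWithinAt.mono hsub)
    (fun t ht => ((hderiv t (mem_of_mem_nhds (hnhds t ht))).hasDerivAt
      (hnhds t ht)).hasDerivWithinAt)
    (intervalIntegrable_quasiScore hM hV hθ ha hμ y)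

theorem expFamilyDensity_eq_mul_exp_quasiLogLikelihood (hM : M.OrdConnected)
    (hV : ∀ t ∈ M, 0 < V t) (hθ : ∀ t ∈ M, HasDerivWithinAt θ (1 / V t) M t)
    (hb : ∀ t ∈ M, HasDerivWithinAt b t (θ '' M) (θ t)) (ha : a ∈ M) (hμ : μ ∈ M)
    (h : ℝ → ℝ) (y : ℝ) :
    expFamilyDensity h θ b μ y =
      expFamilyDensity h θ b a y * Real.exp (quasiLogLikelihood V a y μ) := by
  rw [quasiLogLikelihood_eq_sub hM hV hθ hb ha hμ, expFamilyDensity, expFamilyDensity, mul_assoc,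
    ← Real.exp_add, add_sub_cancel]

end ExponentialFamily

theorem prod_mul_exp_rpow {ι : Type*} (s : Finset ι) {f : ι → ℝ} (hf : ∀ i ∈ s, 0 ≤ f i)
    (q : ι → ℝ) (k : ℝ) :
    ∏ i ∈ s, (f i * Real.exp (q i)) ^ k = (∏ i ∈ s, f i ^ k) * Real.exp (k * ∑ i ∈ s, q i) := by
  rw [Finset.mul_sum, Real.exp_sum, ← Finset.prod_mul_distrib]
  refine Finset.prod_congr rfl fun i hi => ?_
  rw [Real.mul_rpow (hf i hi) (Real.exp_pos _).le, ← Real.exp_mul, mul_comm (q i)]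

theorem quasi_posterior_eq_coarsened_posterior_general {ι B : Type*} [Fintype ι]
    {M : Set ℝ} (hM : M.OrdConnected) {V : ℝ → ℝ} (hV : ∀ t ∈ M, 0 < V t)
    {θ : ℝ → ℝ} (hθ : ∀ t ∈ M, HasDerivWithinAt θ (1 / V t) M t)
    {b : ℝ → ℝ} (hb : ∀ t ∈ M, HasDerivWithinAt b t (θ '' M) (θ t))
    {μ : ι → B → ℝ} (hμ : ∀ i β, μ i β ∈ M) {y : ι → ℝ} {h : ℝ → ℝ} (hh : ∀ i, 0 < h (y i))
    {a : ℝ} (ha : a ∈ M) (pr : B → ℝ) (k : ℝ) :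
    ∃ c : ℝ, 0 < c ∧ ∀ β,
      pr β * Real.exp (k * ∑ i, quasiLogLikelihood V a (y i) (μ i β)) =
        c * pr β * ∏ i, expFamilyDensity h θ b (μ i β) (y i) ^ k := by
  have hfa : ∀ i, 0 < expFamilyDensity h θ b a (y i) := fun i => expFamilyDensity_pos (hh i) θ b a
  have hC : 0 < ∏ i, expFamilyDensity h θ b a (y i) ^ k :=
    Finset.prod_pos fun i _ => Real.rpow_pos_of_pos (hfa i) k
  refine ⟨(∏ i, expFamilyDensity h θ b a (y i) ^ k)⁻¹, inv_pos.2 hC, fun β => ?_⟩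
  have hlik : ∏ i, expFamilyDensity h θ b (μ i β) (y i) ^ k =
      (∏ i, expFamilyDensity h θ b a (y i) ^ k) *
        Real.exp (k * ∑ i, quasiLogLikelihood V a (y i) (μ i β)) := by
    simp only [expFamilyDensity_eq_mul_exp_quasiLogLikelihood hM hV hθ hb ha (hμ _ β)]
    exact prod_mul_exp_rpow _ (fun i _ => (hfa i).le) _ k
  rw [hlik]
  field_simp

/-- Proposition 1 of the paper: when the variance function `V` is the variance
function of a one-parameter exponential family with natural parametrization `θ`
(`θ′ = 1/V`, `b′(θ(μ)) = μ`), the unnormalized quasi-posterior density with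
dispersion `ψ = (α + n)/α` is proportional (as a function of `β`) to the power
posterior approximation of the coarsened posterior with coarsening parameter `α`:
`p(β)·exp{(1/ψ) Σᵢ ∫_a^{μᵢ(β)} (yᵢ − t)/V(t) dt} = c·p(β)·∏ᵢ f(yᵢ | β, xᵢ)^{α/(α+n)}`
for some constant `c > 0` not depending on `β`, where `μᵢ(β) = m(xᵢᵀβ)` and
`f(y | β, x) = h(y)·exp{θ(μ(β))·y − b(θ(μ(β)))}`. -/
theorem quasi_posterior_eq_coarsened_posterior {d n : ℕ}
    (M : Set ℝ) (hMopen : IsOpen M) (hMconn : M.OrdConnected)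
    (V : ℝ → ℝ) (hVcont : ContinuousOn V M) (hVpos : ∀ μ ∈ M, 0 < V μ)
    (θ : ℝ → ℝ) (hθ : ∀ μ ∈ M, HasDerivAt θ (1 / V μ) μ)
    (b : ℝ → ℝ) (hb : ∀ μ ∈ M, HasDerivAt b μ (θ μ))
    (m : ℝ → ℝ) (hmM : ∀ s, m s ∈ M)
    (x : Fin n → EuclideanSpace ℝ (Fin d)) (y : Fin n → ℝ)
    (h : ℝ → ℝ) (hh : ∀ z, 0 < h z)
    (a : ℝ) (ha : a ∈ M)
    (pr : EuclideanSpace ℝ (Fin d) → ℝ) (hpr : ∀ β, 0 ≤ pr β)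
    (α : ℝ) (hα : 0 < α) (ψ : ℝ) (hψ : ψ = (α + n) / α) :
    ∃ c : ℝ, 0 < c ∧ ∀ β : EuclideanSpace ℝ (Fin d),
      pr β * Real.exp ((1 / ψ) *
          ∑ i, ∫ t in a..(m ⟪x i, β⟫), (y i - t) / V t)
        = c * pr β *
          ∏ i, (h (y i) *
              Real.exp (θ (m ⟪x i, β⟫) * y i - b (θ (m ⟪x i, β⟫)))) ^ (α / (α + n)) := by
  rw [hψ, one_div_div]
  exact quasi_posterior_eq_coarsened_posterior_general hMconn hVpos
    (fun t ht => (hθ t ht).hasDerivWithinAt) (fun t ht => (hb t ht).hasDerivWithinAt)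
    (μ := fun i β => m ⟪x i, β⟫) (fun _ _ => hmM _) (fun i => hh (y i)) ha pr _
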